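/- Suppose λ ∈ ρ + C, μ ∈ E, w ∈ W, and ‖λ − w(μ)‖ = ‖ρ_μ‖. Then w(μ) ∈ C and λ = w(μ) + ρ_{w(μ)}, i.e. λ − ρ(λ) = w(μ) − ρ(w(μ)). (This is the Weyl-group form of the statement that the orbits of type (h) at distance exactly ‖ρ^H‖ from a regular admissible orbit O are precisely the (h)-ancestors of O, i.e. their shift equals O.) -/

import Mathlib

open scoped RealInnerProductSpace
open Finset

/-! Put `ν = w μ` and let `P` be the set of positive roots. Among all half-sums of subsets of a
root system, the half-sum of a positive system has the largest norm, so `‖ρ_μ‖ ≤ ‖ρ_ν‖`. Splitting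
`P` by the sign of `⟪α, ν⟫` gives `ρ = ρ_ν + τ₊ + τ₋`, where `⟪τ₊, ρ_ν⟫` and `⟪τ₋, ρ_ν⟫` are
nonnegative because reflections in roots orthogonal to `ν` preserve the value of `⟪·, ν⟫`. Since
`ν ⟂ ρ_ν`, this yields `‖λ - ν - ρ_ν‖² ≤ -2 ⟪λ - ρ, ρ_ν⟫ - 2 ⟪τ₊ + τ₋, ρ_ν⟫ ≤ 0`, so that `λ = ν +
ρ_ν` and `⟪τ₋, ρ_ν⟫ = 0`. Hence `⟪λ, τ₋⟫ = ⟪ν, τ₋⟫`; as `λ` is strictly positive on `P`, no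
positive root is negative on `ν`. -/

section ReflectionStable

variable {E : Type*} [NormedAddCommGroup E] [InnerProductSpace ℝ E]

/-- The reflection `s_β` in the hyperplane orthogonal to `β`; it is the identity for `β = 0`. -/
noncomputable abbrev rootReflection (β : E) : E ≃ₗᵢ[ℝ] E := (ℝ ∙ β)ᗮ.reflection

theorem rootReflection_apply (β x : E) :
    rootReflection β x = x - (2 * ⟪x, β⟫ / ⟪β, β⟫) • β := by
  rw [Submodule.reflection_orthogonal_apply, Submodule.reflection_singleton_apply,
    real_inner_comm, real_inner_self_eq_norm_sq, neg_sub, two_smul, ← add_smul, mul_div_assoc,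
    two_mul]
  rfl

theorem inner_rootReflection_left (β x y : E) :
    ⟪rootReflection β x, y⟫ = ⟪x, y⟫ - 2 * ⟪x, β⟫ / ⟪β, β⟫ * ⟪β, y⟫ := by
  rw [rootReflection_apply, inner_sub_left, real_inner_smul_left]

theorem inner_rootReflection_self (β x : E) : ⟪rootReflection β x, β⟫ = -⟪x, β⟫ := by
  rw [LinearIsometryEquiv.inner_map_eq_flip, Submodule.reflection_symm,
    Submodule.reflection_orthogonalComplement_singleton_eq_neg, inner_neg_right]

theorem inner_lt_inner_rootReflection {β x v : E} (hβ : 0 < ⟪β, v⟫) (hx : ⟪x, β⟫ < 0) :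
    ⟪x, v⟫ < ⟪rootReflection β x, v⟫ := by
  have hββ : 0 < ⟪β, β⟫ := real_inner_self_pos.mpr (by rintro rfl; simp at hβ)
  have hcoeff : 2 * ⟪x, β⟫ / ⟪β, β⟫ < 0 := div_neg_of_neg_of_pos (by linarith) hββ
  rw [inner_rootReflection_left]
  linarith [mul_neg_of_neg_of_pos hcoeff hβ]

/-- A finite set stable under the reflections in its members: a root system without the
requirements of being reduced, crystallographic and free of `0`. -/
def IsReflectionStable (R : Finset E) : Prop :=
  ∀ α ∈ R, ∀ β ∈ R, rootReflection α β ∈ R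

theorem isReflectionStable_iff {R : Finset E} :
    IsReflectionStable R ↔ ∀ α ∈ R, ∀ β ∈ R, β - (2 * ⟪β, α⟫ / ⟪α, α⟫) • α ∈ R := by
  simp only [IsReflectionStable, rootReflection_apply]

/-- The elements of `R` on the positive side of `v`; this is the positive system of `R` defined
by `v` when no element of `R` is orthogonal to `v`. -/
noncomputable abbrev positiveRoots (R : Finset E) (v : E) : Finset E :=
  R.filter fun α => 0 < ⟪α, v⟫

/-- Half the sum of a set of vectors.  In the notation of the paper, `ρ` is
`halfSum (positiveRoots Δ v)`, and Duflo's `ρ(μ)` is `halfSum (positiveRoots Δ μ)`. -/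
noncomputable def halfSum (S : Finset E) : E := (2 : ℝ)⁻¹ • ∑ α ∈ S, α

/-- The vector `ρ_μ` of the subsystem of roots orthogonal to `μ`, where `P` is the set of positive
roots of the whole system. -/
noncomputable abbrev stabilizerRho (P : Finset E) (μ : E) : E :=
  halfSum (P.filter fun α => ⟪α, μ⟫ = 0)

theorem inner_halfSum_left (S : Finset E) (x : E) :
    ⟪halfSum S, x⟫ = 2⁻¹ * ∑ α ∈ S, ⟪α, x⟫ := by
  rw [halfSum, real_inner_smul_left, sum_inner]

theorem inner_halfSum_right (x : E) (S : Finset E) :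
    ⟪x, halfSum S⟫ = 2⁻¹ * ∑ α ∈ S, ⟪x, α⟫ := by
  rw [halfSum, real_inner_smul_right, inner_sum]

theorem map_halfSum {E' F : Type*} [NormedAddCommGroup E'] [InnerProductSpace ℝ E']
    [FunLike F E E'] [LinearMapClass F ℝ E E'] (f : F) (hf : Function.Injective f) (S : Finset E) :
    f (halfSum S) = halfSum (S.map ⟨f, hf⟩) := by
  simp only [halfSum, map_smul, map_sum, sum_map, Function.Embedding.coeFn_mk]

theorem halfSum_empty : halfSum (∅ : Finset E) = 0 := by
  rw [halfSum, sum_empty, smul_zero]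

theorem halfSum_eq_stabilizerRho_add_add (S : Finset E) (x : E) :
    halfSum S = stabilizerRho S x +
      halfSum (S.filter fun α => 0 < ⟪α, x⟫) + halfSum (S.filter fun α => ⟪α, x⟫ < 0) := by
  simp only [halfSum, ← smul_add, sum_filter, ← sum_add_distrib]
  congr 1
  refine sum_congr rfl fun α _ => ?_
  rcases lt_trichotomy ⟪α, x⟫ 0 with h | h | h
  · simp [h, h.ne, h.not_gt]
  · simp [h]
  · simp [h, h.ne', h.not_gt]

/-- The vectors whose reflection stays in `S` cancel in pairs, and the others pair nonnegatively
with `β`. -/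
theorem inner_halfSum_nonneg {S : Finset E} {β : E}
    (hS : ∀ α ∈ S, ⟪α, β⟫ < 0 → rootReflection β α ∈ S) : 0 ≤ ⟪halfSum S, β⟫ := by
  classical
  have hcancel : ∑ α ∈ S with rootReflection β α ∈ S, ⟪α, β⟫ = 0 := by
    refine sum_involution (fun α _ => rootReflection β α) (fun α _ => ?_) (fun α _ hα hfix => ?_)
      (fun α hα => ?_) (fun α _ => Submodule.reflection_reflection _ α)
    · rw [inner_rootReflection_self, add_neg_cancel]
    · have hneg := inner_rootReflection_self β α
      rw [hfix] at hneg
      exact hα (by linarith)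
    · rw [mem_filter, Submodule.reflection_reflection]
      exact (mem_filter.mp hα).symm
  have hrest : 0 ≤ ∑ α ∈ S with rootReflection β α ∉ S, ⟪α, β⟫ := by
    refine sum_nonneg fun α hα => ?_
    rw [mem_filter] at hα
    exact not_lt.mp fun hneg => hα.2 (hS α hα.1 hneg)
  rw [inner_halfSum_left, ← sum_filter_add_sum_filter_not S (fun α => rootReflection β α ∈ S),
    hcancel, zero_add]
  positivity

theorem inner_nonneg_of_add_stabilizerRho_dominant {P : Finset E} {ν : E}
    (hdom : ∀ α ∈ P, 0 < ⟪ν + stabilizerRho P ν, α⟫)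
    (horth : ⟪halfSum (P.filter fun α => ⟪α, ν⟫ < 0), stabilizerRho P ν⟫ = 0) {α : E}
    (hα : α ∈ P) : 0 ≤ ⟪ν, α⟫ := by
  rw [real_inner_comm]
  by_contra! hαν
  have hne : (P.filter fun α => ⟪α, ν⟫ < 0).Nonempty := ⟨α, mem_filter.mpr ⟨hα, hαν⟩⟩
  have hν : ⟪halfSum (P.filter fun α => ⟪α, ν⟫ < 0), ν⟫ < 0 := by
    rw [inner_halfSum_left]
    exact mul_neg_of_pos_of_neg (by norm_num) (sum_neg (fun β hβ => (mem_filter.mp hβ).2) hne)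
  have hsum : 0 < ⟪ν + stabilizerRho P ν, halfSum (P.filter fun α => ⟪α, ν⟫ < 0)⟫ := by
    rw [inner_halfSum_right]
    exact mul_pos (by norm_num) (sum_pos (fun β hβ => hdom β (mem_filter.mp hβ).1) hne)
  rw [real_inner_comm, inner_add_right, horth, add_zero] at hsum
  exact hsum.not_gt hν

theorem exists_norm_eq_forall_inner_nonneg {P X : Set E} {v x : E}
    (hP : ∀ β ∈ P, 0 < ⟪β, v⟫) (hX : X.Finite)
    (hPX : ∀ β ∈ P, ∀ y ∈ X, rootReflection β y ∈ X) (hx : x ∈ X) :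
    ∃ y ∈ X, ‖y‖ = ‖x‖ ∧ ∀ β ∈ P, 0 ≤ ⟪y, β⟫ := by
  obtain ⟨y, ⟨hyX, hyx⟩, hmax⟩ := Set.exists_max_image {y ∈ X | ‖y‖ = ‖x‖} (fun y => ⟪y, v⟫)
    (hX.sep _) ⟨x, hx, rfl⟩
  refine ⟨y, hyX, hyx, fun β hβ => not_lt.mp fun hneg => ?_⟩
  have hle := hmax (rootReflection β y)
    ⟨hPX β hβ y hyX, by rw [LinearIsometryEquiv.norm_map, hyx]⟩
  exact hle.not_gt (inner_lt_inner_rootReflection (hP β hβ) hneg)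

theorem apply_mem_iff_of_mem_closure {R : Set E} {S : Set (E ≃ₗᵢ[ℝ] E)}
    (hS : ∀ s ∈ S, ∀ x, s x ∈ R ↔ x ∈ R) {w : E ≃ₗᵢ[ℝ] E} (hw : w ∈ Subgroup.closure S) (x : E) :
    w x ∈ R ↔ x ∈ R := by
  induction hw using Subgroup.closure_induction generalizing x with
  | mem s hs => exact hS s hs x
  | one => rfl
  | mul a b _ _ ha hb => exact (ha (b x)).trans (hb x)
  | inv a _ ha => rw [← ha (a⁻¹ x), LinearIsometryEquiv.inv_def, a.apply_symm_apply]

namespace IsReflectionStable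

variable {R : Finset E} {v ν lam : E}

theorem neg_mem (hR : IsReflectionStable R) {α : E} (hα : α ∈ R) : -α ∈ R :=
  Submodule.reflection_orthogonalComplement_singleton_eq_neg (𝕜 := ℝ) α ▸ hR α hα α hα

theorem rootReflection_mem_iff (hR : IsReflectionStable R) {α : E} (hα : α ∈ R) (x : E) :
    rootReflection α x ∈ R ↔ x ∈ R :=
  ⟨fun h => Submodule.reflection_reflection (ℝ ∙ α)ᗮ x ▸ hR α hα _ h, hR α hα x⟩

theorem apply_mem_of_mem_closure_reflections (hR : IsReflectionStable R) {w : E ≃ₗᵢ[ℝ] E}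
    (hw : w ∈ Subgroup.closure
      {s : E ≃ₗᵢ[ℝ] E | ∃ α ∈ R, ∀ x : E, s x = x - (2 * ⟪x, α⟫ / ⟪α, α⟫) • α}) {α : E}
    (hα : α ∈ R) : w α ∈ R := by
  refine (apply_mem_iff_of_mem_closure (R := R) ?_ hw α).mpr hα
  rintro s ⟨β, hβ, hs⟩ x
  rw [hs, ← rootReflection_apply]
  exact hR.rootReflection_mem_iff hβ x

theorem filter_inner_eq_zero (hR : IsReflectionStable R) (x : E) :
    IsReflectionStable (R.filter fun α => ⟪α, x⟫ = 0) := by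
  intro α hα β hβ
  rw [mem_filter] at hα hβ ⊢
  exact ⟨hR α hα.1 β hβ.1, by rw [inner_rootReflection_left, hα.2, hβ.2, mul_zero, sub_zero]⟩

theorem neg_mem_positiveRoots (hR : IsReflectionStable R) (hv : ∀ α ∈ R, ⟪α, v⟫ ≠ 0) {α : E}
    (hα : α ∈ R) (hneg : α ∉ positiveRoots R v) : -α ∈ positiveRoots R v := by
  rw [mem_filter, not_and, not_lt] at hneg
  rw [mem_filter, inner_neg_left, neg_pos]
  exact ⟨hR.neg_mem hα, lt_of_le_of_ne (hneg hα) (hv α hα)⟩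

theorem inner_halfSum_positiveRoots_pos (hR : IsReflectionStable R) {β : E}
    (hβ : β ∈ positiveRoots R v) : 0 < ⟪halfSum (positiveRoots R v), β⟫ := by
  classical
  obtain ⟨hβR, hβv⟩ := mem_filter.mp hβ
  have hrest : 0 ≤ ⟪halfSum ((positiveRoots R v).erase β), β⟫ := by
    refine inner_halfSum_nonneg fun α hα hαβ => ?_
    obtain ⟨hαR, hαv⟩ := mem_filter.mp (mem_of_mem_erase hα)
    refine mem_erase.mpr ⟨fun heq => ?_, mem_filter.mpr
      ⟨hR β hβR α hαR, hαv.trans (inner_lt_inner_rootReflection hβv hαβ)⟩⟩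
    have hα_eq : α = -β := by
      rw [← Submodule.reflection_reflection (ℝ ∙ β)ᗮ α, heq,
        Submodule.reflection_orthogonalComplement_singleton_eq_neg]
    rw [hα_eq, inner_neg_left] at hαv
    linarith
  have hββ : 0 < ⟪β, β⟫ := real_inner_self_pos.mpr (by rintro rfl; simp at hβv)
  rw [inner_halfSum_left] at hrest ⊢
  rw [← add_sum_erase _ _ hβ]
  linarith

theorem inner_pos_of_shifted_dominant (hR : IsReflectionStable R)
    (hlam : ∀ α ∈ positiveRoots R v, 0 ≤ ⟪lam - halfSum (positiveRoots R v), α⟫) {α : E}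
    (hα : α ∈ positiveRoots R v) : 0 < ⟪lam, α⟫ := by
  have hle := hlam α hα
  rw [inner_sub_left, sub_nonneg] at hle
  exact (hR.inner_halfSum_positiveRoots_pos hα).trans_le hle

theorem inner_halfSum_le_of_dominant (hR : IsReflectionStable R) (hv : ∀ α ∈ R, ⟪α, v⟫ ≠ 0)
    {x : E} (hx : ∀ α ∈ positiveRoots R v, 0 ≤ ⟪x, α⟫) {A : Finset E} (hA : A ⊆ R) :
    ⟪x, halfSum A⟫ ≤ ⟪x, halfSum (positiveRoots R v)⟫ := by
  classical
  simp only [inner_halfSum_right]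
  gcongr 2⁻¹ * ?_
  calc ∑ α ∈ A, ⟪x, α⟫
      ≤ ∑ α ∈ A with α ∈ positiveRoots R v, ⟪x, α⟫ := by
        rw [sum_filter]
        refine sum_le_sum fun α hα => ?_
        split_ifs with hpos
        · rfl
        · simpa only [inner_neg_right, neg_nonneg] using
            hx (-α) (hR.neg_mem_positiveRoots hv (hA hα) hpos)
    _ ≤ ∑ α ∈ positiveRoots R v, ⟪x, α⟫ :=
        sum_le_sum_of_subset_of_nonneg (fun α hα => (mem_filter.mp hα).2) fun α hα _ => hx α hα

/-- Reflections permute the half-sums of subsets, so the one given by `A` may be replaced by a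
dominant one `y` of the same norm; then `⟪y, y⟫ ≤ ⟪y, ρ⟫`. -/
theorem norm_halfSum_le (hR : IsReflectionStable R) (hv : ∀ α ∈ R, ⟪α, v⟫ ≠ 0)
    {A : Finset E} (hA : A ⊆ R) : ‖halfSum A‖ ≤ ‖halfSum (positiveRoots R v)‖ := by
  have hstable : ∀ β ∈ positiveRoots R v, ∀ y ∈ halfSum '' {A | A ⊆ R},
      rootReflection β y ∈ halfSum '' {A | A ⊆ R} := by
    rintro β hβ _ ⟨B, hB, rfl⟩
    rw [map_halfSum (rootReflection β) (rootReflection β).injective]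
    refine Set.mem_image_of_mem _ fun α hα => ?_
    obtain ⟨γ, hγ, rfl⟩ := mem_map.mp hα
    exact hR β (mem_filter.mp hβ).1 γ (hB hγ)
  obtain ⟨_, ⟨B, hB, rfl⟩, hnorm, hdom⟩ := exists_norm_eq_forall_inner_nonneg
    (fun β hβ => (mem_filter.mp (mem_coe.mp hβ)).2)
    ((R.powerset.finite_toSet.subset fun _ hB => mem_coe.mpr (mem_powerset.mpr hB)).image _)
    hstable (Set.mem_image_of_mem halfSum hA)
  have hsq : ‖halfSum B‖ * ‖halfSum B‖ ≤ ‖halfSum B‖ * ‖halfSum (positiveRoots R v)‖ := by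
    rw [← real_inner_self_eq_norm_mul_norm]
    exact (hR.inner_halfSum_le_of_dominant hv hdom hB).trans (real_inner_le_norm _ _)
  rw [← hnorm]
  rcases (norm_nonneg (halfSum B)).eq_or_lt with hzero | hpos
  · rw [← hzero]
    exact norm_nonneg _
  · exact le_of_mul_le_mul_left hsq hpos

theorem norm_stabilizerRho_le_map (hR : IsReflectionStable R) (hv : ∀ α ∈ R, ⟪α, v⟫ ≠ 0)
    {w : E →ₗᵢ[ℝ] E} (hw : ∀ α ∈ R, w α ∈ R) (μ : E) :
    ‖stabilizerRho (positiveRoots R v) μ‖ ≤ ‖stabilizerRho (positiveRoots R v) (w μ)‖ := by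
  rw [stabilizerRho, stabilizerRho, ← w.norm_map, map_halfSum w w.injective,
    filter_comm (fun α => 0 < ⟪α, v⟫) (fun α => ⟪α, w μ⟫ = 0)]
  refine (hR.filter_inner_eq_zero (w μ)).norm_halfSum_le
    (fun α hα => hv α (mem_filter.mp hα).1) fun α hα => ?_
  obtain ⟨β, hβ, rfl⟩ := mem_map.mp hα
  simp only [mem_filter] at hβ
  exact mem_filter.mpr ⟨hw β hβ.1.1, (w.inner_map_map β μ).trans hβ.2⟩

theorem inner_halfSum_filter_stabilizerRho_nonneg (hR : IsReflectionStable R) (p : ℝ → Prop)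
    [DecidablePred p] :
    0 ≤ ⟪halfSum ((positiveRoots R v).filter fun α => p ⟪α, ν⟫),
      stabilizerRho (positiveRoots R v) ν⟫ := by
  rw [inner_halfSum_right]
  refine mul_nonneg (by norm_num) (sum_nonneg fun β hβ => inner_halfSum_nonneg fun α hα hαβ => ?_)
  simp only [mem_filter] at hα hβ ⊢
  obtain ⟨⟨hβR, hβv⟩, hβν⟩ := hβ
  obtain ⟨⟨hαR, hαv⟩, hpα⟩ := hα
  refine ⟨⟨hR β hβR α hαR, hαv.trans (inner_lt_inner_rootReflection hβv hαβ)⟩, ?_⟩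
  rwa [inner_rootReflection_left, hβν, mul_zero, sub_zero]

theorem eq_add_stabilizerRho_of_norm_sub_le (hR : IsReflectionStable R)
    (hlam : ∀ α ∈ positiveRoots R v, 0 ≤ ⟪lam - halfSum (positiveRoots R v), α⟫)
    (hdist : ‖lam - ν‖ ≤ ‖stabilizerRho (positiveRoots R v) ν‖) :
    lam = ν + stabilizerRho (positiveRoots R v) ν ∧
      ⟪halfSum ((positiveRoots R v).filter fun α => ⟪α, ν⟫ < 0),
        stabilizerRho (positiveRoots R v) ν⟫ = 0 := by
  have hchamber :
      0 ≤ ⟪lam - halfSum (positiveRoots R v), stabilizerRho (positiveRoots R v) ν⟫ := by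
    rw [inner_halfSum_right]
    exact mul_nonneg (by norm_num) (sum_nonneg fun α hα => hlam α (mem_filter.mp hα).1)
  have horth : ⟪ν, stabilizerRho (positiveRoots R v) ν⟫ = 0 := by
    rw [real_inner_comm, inner_halfSum_left, sum_eq_zero fun α hα => (mem_filter.mp hα).2, mul_zero]
  have hpos := hR.inner_halfSum_filter_stabilizerRho_nonneg (v := v) (ν := ν) (0 < ·)
  have hneg := hR.inner_halfSum_filter_stabilizerRho_nonneg (v := v) (ν := ν) (· < 0)
  rw [halfSum_eq_stabilizerRho_add_add _ ν] at hchamber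
  set ρν := stabilizerRho (positiveRoots R v) ν
  have hdist_sq : ‖lam - ν‖ ^ 2 ≤ ‖ρν‖ ^ 2 := by gcongr
  have hexpand : ‖lam - ν - ρν‖ ^ 2 = ‖lam - ν‖ ^ 2 + ‖ρν‖ ^ 2 - 2 * ⟪lam, ρν⟫ := by
    rw [norm_sub_sq_real, inner_sub_left, horth]
    ring
  simp only [inner_sub_left, inner_add_left, real_inner_self_eq_norm_sq] at hchamber
  have hzero : ‖lam - ν - ρν‖ ^ 2 = 0 := le_antisymm (by linarith) (sq_nonneg _)
  refine ⟨?_, by linarith [sq_nonneg ‖lam - ν - ρν‖]⟩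
  rwa [sq_eq_zero_iff, norm_eq_zero, sub_sub, sub_eq_zero] at hzero

theorem halfSum_positiveRoots_of_dominant (hR : IsReflectionStable R)
    (hv : ∀ α ∈ R, ⟪α, v⟫ ≠ 0) (hν : ∀ α ∈ positiveRoots R v, 0 ≤ ⟪ν, α⟫) :
    halfSum (positiveRoots R v) =
      stabilizerRho (positiveRoots R v) ν + halfSum (positiveRoots R ν) := by
  have hneg : (positiveRoots R v).filter (fun α => ⟪α, ν⟫ < 0) = ∅ :=
    filter_eq_empty_iff.mpr fun α hα => (real_inner_comm α ν ▸ hν α hα).not_gt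
  have hpos : (positiveRoots R v).filter (fun α => 0 < ⟪α, ν⟫) = positiveRoots R ν := by
    rw [filter_comm, filter_eq_self]
    intro α hα
    obtain ⟨hαR, hαν⟩ := mem_filter.mp hα
    by_contra hαv
    have hle := hν (-α) (hR.neg_mem_positiveRoots hv hαR fun h => hαv (mem_filter.mp h).2)
    rw [inner_neg_right, real_inner_comm] at hle
    linarith
  rw [halfSum_eq_stabilizerRho_add_add _ ν, hneg, hpos, halfSum_empty, add_zero]

theorem halfSum_positiveRoots_of_strictly_dominant (hR : IsReflectionStable R)
    (hv : ∀ α ∈ R, ⟪α, v⟫ ≠ 0) (hlam : ∀ α ∈ positiveRoots R v, 0 < ⟪lam, α⟫) :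
    halfSum (positiveRoots R lam) = halfSum (positiveRoots R v) := by
  have hzero : stabilizerRho (positiveRoots R v) lam = 0 := by
    rw [stabilizerRho, filter_eq_empty_iff.mpr fun α hα =>
      (real_inner_comm α lam ▸ hlam α hα).ne', halfSum_empty]
  rw [hR.halfSum_positiveRoots_of_dominant hv fun α hα => (hlam α hα).le, hzero, zero_add]

end IsReflectionStable

theorem orbit_distance_eq_ancestor_general {R : Finset E} (hR : IsReflectionStable R) {v : E}
    (hv : ∀ α ∈ R, ⟪α, v⟫ ≠ 0) {lam μ : E}
    (hlam : ∀ α ∈ positiveRoots R v, 0 ≤ ⟪lam - halfSum (positiveRoots R v), α⟫)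
    {w : E →ₗᵢ[ℝ] E} (hw : ∀ α ∈ R, w α ∈ R)
    (hdist : ‖lam - w μ‖ ≤ ‖stabilizerRho (positiveRoots R v) μ‖) :
    (∀ α ∈ positiveRoots R v, 0 ≤ ⟪w μ, α⟫) ∧
      lam = w μ + stabilizerRho (positiveRoots R v) (w μ) ∧
      lam - halfSum (positiveRoots R lam) = w μ - halfSum (positiveRoots R (w μ)) := by
  obtain ⟨hshift, horth⟩ := hR.eq_add_stabilizerRho_of_norm_sub_le hlam
    (hdist.trans (hR.norm_stabilizerRho_le_map hv hw μ))
  have hpos : ∀ α ∈ positiveRoots R v, 0 < ⟪lam, α⟫ := fun α hα =>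
    hR.inner_pos_of_shifted_dominant hlam hα
  have hdom : ∀ α ∈ positiveRoots R v, 0 ≤ ⟪w μ, α⟫ := fun α hα =>
    inner_nonneg_of_add_stabilizerRho_dominant (hshift ▸ hpos) horth hα
  refine ⟨hdom, hshift, ?_⟩
  rw [hR.halfSum_positiveRoots_of_strictly_dominant hv hpos,
    hR.halfSum_positiveRoots_of_dominant hv hdom, ← sub_sub, sub_eq_of_eq_add hshift]

end ReflectionStable

theorem orbit_distance_eq_ancestor
    {E : Type*} [NormedAddCommGroup E] [InnerProductSpace ℝ E] [FiniteDimensional ℝ E]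
    (Δ : Finset E)
    (hΔ0 : (0 : E) ∉ Δ)
    (hΔred : ∀ α ∈ Δ, ∀ t : ℝ, t • α ∈ Δ → t = 1 ∨ t = -1)
    (hΔrefl : ∀ α ∈ Δ, ∀ β ∈ Δ, β - (2 * ⟪β, α⟫ / ⟪α, α⟫) • α ∈ Δ)
    (hΔcrys : ∀ α ∈ Δ, ∀ β ∈ Δ, ∃ n : ℤ, 2 * ⟪β, α⟫ / ⟪α, α⟫ = (n : ℝ))
    (v : E) (hv : ∀ α ∈ Δ, ⟪α, v⟫ ≠ 0)
    (Δpos : Finset E) (hΔpos : Δpos = Δ.filter (fun α => 0 < ⟪α, v⟫))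
    (ρ : E) (hρ : ρ = (2 : ℝ)⁻¹ • ∑ α ∈ Δpos, α)    (W : Subgroup (E ≃ₗᵢ[ℝ] E))
    (hW : W = Subgroup.closure
      {s : E ≃ₗᵢ[ℝ] E | ∃ α ∈ Δ, ∀ x : E, s x = x - (2 * ⟪x, α⟫ / ⟪α, α⟫) • α})
    (lam μ : E)
    (hlam : ∀ α ∈ Δpos, 0 ≤ ⟪lam - ρ, α⟫)
    (ρμ : E) (hρμ : ρμ = (2 : ℝ)⁻¹ • ∑ α ∈ Δpos.filter (fun α => ⟪α, μ⟫ = 0), α)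
    (w : E ≃ₗᵢ[ℝ] E) (hw : w ∈ W)
    (heq : ‖lam - w μ‖ = ‖ρμ‖) :
    (∀ α ∈ Δpos, 0 ≤ ⟪w μ, α⟫) ∧
    lam = w μ + (2 : ℝ)⁻¹ • ∑ α ∈ Δpos.filter (fun α => ⟪α, w μ⟫ = 0), α ∧
    lam - (2 : ℝ)⁻¹ • ∑ α ∈ Δ.filter (fun α => 0 < ⟪α, lam⟫), α
      = w μ - (2 : ℝ)⁻¹ • ∑ α ∈ Δ.filter (fun α => 0 < ⟪α, w μ⟫), α := by
  subst hΔpos hρ hW hρμ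
  have hR : IsReflectionStable Δ := isReflectionStable_iff.mpr hΔrefl
  exact orbit_distance_eq_ancestor_general hR hv hlam (w := w.toLinearIsometry)
    (fun _ => hR.apply_mem_of_mem_closure_reflections hw) heq.le
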